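/- Let g : [1,∞) → ℝ be continuous and positive with ∫₁^∞ dt/g(t) = 1, and let δ > 0. Then for all x > 1, (1 + h_δ'(x))² / (−h_δ''(x)) = ((1+δ)/δ)·g(x). -/

import Mathlib

open MeasureTheory Set

/-- `G_δ(x) = (1/(1+δ))·(1 + δ·∫₁^x dt/g(t))` (normalized so that `∫₁^∞ dt/g(t) = 1`). -/
noncomputable def Gdelta (g : ℝ → ℝ) (δ x : ℝ) : ℝ :=
  (1 / (1 + δ)) * (1 + δ * ∫ t in (1:ℝ)..x, 1 / g t)

/-- `h_δ(x) = ∫₁^x (1 − G_δ(y))/G_δ(y) dy`. -/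
noncomputable def hdelta (g : ℝ → ℝ) (δ x : ℝ) : ℝ :=
  ∫ y in (1:ℝ)..x, (1 - Gdelta g δ y) / Gdelta g δ y

/-!
The integrand of `h` is `h' = 1 / G - 1`. Hence `1 + h' = 1 / G` and `-h'' = G' / G ^ 2`, so the
quotient `(1 + h') ^ 2 / (-h'')` is `1 / G'`, and the fundamental theorem of calculus gives
`G' = δ / ((1 + δ) * g)`.
-/

open scoped Topology

section Primitive

variable {E : Type*} [NormedAddCommGroup E] [NormedSpace ℝ E]
  {f : ℝ → E} {s : Set ℝ} {a b : ℝ}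

theorem exists_Icc_subset_mem_nhdsWithin {α : Type*} [TopologicalSpace α] [LinearOrder α]
    [OrderClosedTopology α] {s : Set α} {x : α} (hs : s.OrdConnected) (hx : x ∈ s) :
    ∃ u v, x ∈ Icc u v ∧ Icc u v ⊆ s ∧ Icc u v ∈ 𝓝[s] x := by
  obtain ⟨u, hus, hux, hu⟩ : ∃ u ∈ s, u ≤ x ∧ Ici u ∈ 𝓝[s] x := by
    by_cases! hmin : ∃ u ∈ s, u < x
    · obtain ⟨u, hus, hux⟩ := hmin
      exact ⟨u, hus, hux.le, mem_nhdsWithin_of_mem_nhds (Ici_mem_nhds hux)⟩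
    · exact ⟨x, hx, le_rfl, Filter.mem_of_superset self_mem_nhdsWithin hmin⟩
  obtain ⟨v, hvs, hxv, hv⟩ : ∃ v ∈ s, x ≤ v ∧ Iic v ∈ 𝓝[s] x := by
    by_cases! hmax : ∃ v ∈ s, x < v
    · obtain ⟨v, hvs, hxv⟩ := hmax
      exact ⟨v, hvs, hxv.le, mem_nhdsWithin_of_mem_nhds (Iic_mem_nhds hxv)⟩
    · exact ⟨x, hx, le_rfl, Filter.mem_of_superset self_mem_nhdsWithin hmax⟩
  exact ⟨u, v, ⟨hux, hxv⟩, hs.out hus hvs, Filter.inter_mem hu hv⟩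

theorem continuousOn_integral_of_locallyIntegrableOn {μ : Measure ℝ} [NullSingletonClass μ]
    (hs : s.OrdConnected) (hf : LocallyIntegrableOn f s μ) (ha : a ∈ s) :
    ContinuousOn (fun x ↦ ∫ t in a..x, f t ∂μ) s := by
  intro x hx
  obtain ⟨u, v, hxuv, huv, hnhds⟩ := exists_Icc_subset_mem_nhdsWithin hs hx
  have hu : u ∈ s := huv ⟨le_rfl, hxuv.1.trans hxuv.2⟩
  have hv : v ∈ s := huv ⟨hxuv.1.trans hxuv.2, le_rfl⟩
  have hint : IntervalIntegrable f μ (min a u) (max a v) :=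
    (hf.integrableOn_compact_subset
      (hs.uIcc_subset (min_rec' (· ∈ s) ha hu) (max_rec' (· ∈ s) ha hv))
      isCompact_uIcc).intervalIntegrable
  exact (intervalIntegral.continuousWithinAt_primitive
    (measure_singleton x) hint).mono_of_mem_nhdsWithin hnhds

theorem hasDerivAt_integral_of_continuousOn [CompleteSpace E]
    (hs : s.OrdConnected) (hf : ContinuousOn f s) (ha : a ∈ s) (hb : s ∈ 𝓝 b) :
    HasDerivAt (fun x ↦ ∫ t in a..x, f t) (f b) b := by
  have hint : IntervalIntegrable f volume a b :=
    (hf.mono (hs.uIcc_subset ha (mem_of_mem_nhds hb))).intervalIntegrable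
  have hmeas : StronglyMeasurableAtFilter f (𝓝 b) :=
    nhdsWithin_eq_nhds.2 hb ▸ hf.stronglyMeasurableAtFilter_nhdsWithin hs.measurableSet b
  exact intervalIntegral.integral_hasDerivAt_right hint hmeas (hf.continuousAt hb)

end Primitive

theorem one_add_deriv_sq_mul_eq_neg_deriv_deriv {𝕜 : Type*} [NontriviallyNormedField 𝕜]
    {G h : 𝕜 → 𝕜} {G' x : 𝕜} (hG : HasDerivAt G G' x) (hGx : G x ≠ 0)
    (hh : deriv h =ᶠ[𝓝 x] fun y ↦ (1 - G y) / G y) :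
    (1 + deriv h x) ^ 2 * G' = -deriv (deriv h) x := by
  have hquot : HasDerivAt (fun y ↦ (1 - G y) / G y) (-G' / G x ^ 2) x :=
    ((hG.const_sub 1).fun_div hG hGx).congr_deriv (by ring)
  rw [hh.eq_of_nhds, (hquot.congr_of_eventuallyEq hh).deriv]
  field_simp
  ring

section Gdelta

variable {g : ℝ → ℝ} {δ x : ℝ} {s : Set ℝ}

theorem Gdelta_pos (hδ : 0 ≤ δ) (hx : 1 ≤ x) (hg : ∀ t ∈ Icc 1 x, 0 ≤ g t) :
    0 < Gdelta g δ x := by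
  have hint : 0 ≤ ∫ t in (1 : ℝ)..x, 1 / g t :=
    intervalIntegral.integral_nonneg hx fun t ht ↦ one_div_nonneg.2 (hg t ht)
  unfold Gdelta
  positivity

theorem continuousOn_Gdelta (hs : s.OrdConnected) (h1 : 1 ∈ s)
    (hg : LocallyIntegrableOn (fun t ↦ 1 / g t) s) : ContinuousOn (Gdelta g δ) s :=
  ((continuousOn_integral_of_locallyIntegrableOn hs hg h1).const_mul δ |>.const_add 1).const_mul _

theorem hasDerivAt_Gdelta (hs : s.OrdConnected) (h1 : 1 ∈ s) (hx : s ∈ 𝓝 x)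
    (hg : ContinuousOn (fun t ↦ 1 / g t) s) :
    HasDerivAt (Gdelta g δ) (δ / (1 + δ) / g x) x :=
  (((hasDerivAt_integral_of_continuousOn hs hg h1 hx).const_mul δ |>.const_add 1).const_mul
    (1 / (1 + δ))).congr_deriv (by ring)

theorem hasDerivAt_hdelta (hs : s.OrdConnected) (h1 : 1 ∈ s) (hx : s ∈ 𝓝 x)
    (hg : LocallyIntegrableOn (fun t ↦ 1 / g t) s) (hG : ∀ t ∈ s, Gdelta g δ t ≠ 0) :
    HasDerivAt (hdelta g δ) ((1 - Gdelta g δ x) / Gdelta g δ x) x :=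
  have hGc : ContinuousOn (Gdelta g δ) s := continuousOn_Gdelta hs h1 hg
  hasDerivAt_integral_of_continuousOn hs ((continuousOn_const.sub hGc).div hGc hG) h1 hx

theorem stmt_4_general (hδ : δ ≠ 0) (hs : s.OrdConnected) (h1 : 1 ∈ s) (hx : s ∈ 𝓝 x)
    (hgc : ContinuousOn g s) (hg : ∀ t ∈ s, g t ≠ 0) (hG : ∀ t ∈ s, Gdelta g δ t ≠ 0) :
    (1 + deriv (hdelta g δ) x) ^ 2 / (-deriv (deriv (hdelta g δ)) x) = (1 + δ) / δ * g x := by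
  have hinv : ContinuousOn (fun t ↦ 1 / g t) s := continuousOn_const.div hgc hg
  have hloc : LocallyIntegrableOn (fun t ↦ 1 / g t) s := hinv.locallyIntegrableOn hs.measurableSet
  have hderiv : deriv (hdelta g δ) =ᶠ[𝓝 x] fun y ↦ (1 - Gdelta g δ y) / Gdelta g δ y := by
    filter_upwards [eventually_mem_nhds_iff.2 hx] with y hy
    exact (hasDerivAt_hdelta hs h1 hy hloc hG).deriv
  have hgx : g x ≠ 0 := hg x (mem_of_mem_nhds hx)
  have hGx : Gdelta g δ x ≠ 0 := hG x (mem_of_mem_nhds hx)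
  have hδ1 : 1 + δ ≠ 0 := fun h ↦ hG 1 h1 (by simp [Gdelta, h])
  have hone_add : 1 + deriv (hdelta g δ) x ≠ 0 := by
    rw [hderiv.eq_of_nhds, one_add_div hGx, add_sub_cancel]
    exact one_div_ne_zero hGx
  have hmul : (1 + deriv (hdelta g δ) x) ^ 2 * (δ / (1 + δ) / g x) =
      -deriv (deriv (hdelta g δ)) x :=
    one_add_deriv_sq_mul_eq_neg_deriv_deriv (hasDerivAt_Gdelta hs h1 hx hinv) hGx hderiv
  have hderiv₂ : -deriv (deriv (hdelta g δ)) x ≠ 0 :=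
    hmul ▸ mul_ne_zero (pow_ne_zero 2 hone_add) (div_ne_zero (div_ne_zero hδ hδ1) hgx)
  rw [div_eq_iff hderiv₂, ← hmul]
  field_simp

end Gdelta

theorem stmt_4 (g : ℝ → ℝ) (δ : ℝ) (hδ : 0 < δ)
    (hgc : ContinuousOn g (Set.Ici 1))
    (hgpos : ∀ x ∈ Set.Ici (1:ℝ), 0 < g x)
    (hgint : IntegrableOn (fun t => 1 / g t) (Set.Ioi 1))
    (hgnorm : (∫ t in Set.Ioi (1:ℝ), 1 / g t) = 1) :
    ∀ x ∈ Set.Ioi (1:ℝ),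
      (1 + deriv (hdelta g δ) x) ^ 2 / (-(deriv (deriv (hdelta g δ)) x)) = ((1 + δ) / δ) * g x :=
  fun _ hx ↦ stmt_4_general hδ.ne' ordConnected_Ici self_mem_Ici (Ici_mem_nhds hx) hgc
    (fun t ht ↦ (hgpos t ht).ne')
    fun _ ht ↦ (Gdelta_pos hδ.le ht fun u hu ↦ (hgpos u hu.1).le).ne'
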